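/- arXiv:0803.1339 — 3 statements merged into one kernel-verified Lean document; each statement's English description precedes it below -/
import Mathlib

section
/- Let Φ(u) be the 2n×2n matrix over End(P) with block form Φ(u) = [[u·1_n, D·J_n], [−J_n·M, −u·1_n]] (scalars acting as scalar endomorphisms). For g ∈ GL_n(ℂ), let Ad_{π(g)}(Φ(u)) denote the 2n×2n matrix whose (i,j)-entry is π(g) ∘ Φ(u)_{i,j} ∘ π(g)⁻¹. Then for every g ∈ GL_n(ℂ) and u ∈ ℂ, Ad_{π(g)}(Φ(u)) = ι(ᵗg) · Φ(u) · ι(ᵗg)⁻¹, where ι(h) := diag(h, J_n (ᵗh)⁻¹ J_n) ∈ GL_{2n}(ℂ) (so ι(ᵗg) = diag(ᵗg, J_n g⁻¹ J_n)), and the products on the right are matrix products in which entries of complex matrices act on End(P) by scalar multiplication. -/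
open Matrix MvPolynomial

noncomputable section

/-- Index set for entries `x_{i,j}` with `i < j`. -/
abbrev Idx (n : ℕ) := {p : Fin n × Fin n // p.1 < p.2}

/-- Polynomial algebra on the space of alternating `n × n` matrices. -/
abbrev P (n : ℕ) := MvPolynomial (Idx n) ℂ

/-- Multiplication operator `M_{i,j}` (with `M_{j,i} = -M_{i,j}`, `M_{i,i} = 0`). -/
def Mop (n : ℕ) (i j : Fin n) : Module.End ℂ (P n) :=
  if h : i < j then LinearMap.mulLeft ℂ (X ⟨(i, j), h⟩)
  else if h' : j < i then -LinearMap.mulLeft ℂ (X ⟨(j, i), h'⟩ : P n)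
  else 0

/-- Derivation `D_{i,j} = ∂/∂x_{i,j}` (with `D_{j,i} = -D_{i,j}`, `D_{i,i} = 0`). -/
def Dop (n : ℕ) (i j : Fin n) : Module.End ℂ (P n) :=
  if h : i < j then ((pderiv ⟨(i, j), h⟩ : Derivation ℂ (P n) (P n)) : P n →ₗ[ℂ] P n)
  else if h' : j < i then -((pderiv ⟨(j, i), h'⟩ : Derivation ℂ (P n) (P n)) : P n →ₗ[ℂ] P n)
  else 0

/-- The generic alternating matrix with entries in `P n`. -/
def genMat (n : ℕ) : Matrix (Fin n) (Fin n) (P n) := Matrix.of fun i j =>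
  if h : i < j then X ⟨(i, j), h⟩
  else if h' : j < i then -X ⟨(j, i), h'⟩
  else 0

/-- The representation `π(g)` of `GL n ℂ` on `P n`, sending `x_{i,j}` to the
`(i,j)`-entry of `g⁻¹ x ᵗ(g⁻¹)`. -/
def piHom (n : ℕ) (g : GL (Fin n) ℂ) : P n →ₐ[ℂ] P n :=
  aeval fun v : Idx n =>
    ((((g⁻¹ : GL (Fin n) ℂ) : Matrix (Fin n) (Fin n) ℂ).map (algebraMap ℂ (P n)) * genMat n *
      (((g⁻¹ : GL (Fin n) ℂ) : Matrix (Fin n) (Fin n) ℂ).map (algebraMap ℂ (P n)))ᵀ))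
      v.1.1 v.1.2

/-- The matrix `J_n` with 1's on the anti-diagonal. -/
def Jmat (A : Type*) [Zero A] [One A] (n : ℕ) : Matrix (Fin n) (Fin n) A :=
  Matrix.of fun i j => if (i : ℕ) + (j : ℕ) = n - 1 then 1 else 0

/-- The matrix `Φ(u) = [[u·1_n, D·J_n], [−J_n·M, −u·1_n]]` over `End(P)`. -/
def Phi (n : ℕ) (u : ℂ) : Matrix (Fin n ⊕ Fin n) (Fin n ⊕ Fin n) (Module.End ℂ (P n)) :=
  Matrix.fromBlocks (u • 1) ((Matrix.of fun i j => Dop n i j) * Jmat (Module.End ℂ (P n)) n)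
    (-(Jmat (Module.End ℂ (P n)) n * Matrix.of fun i j => Mop n i j)) (-(u • 1))

/-- The embedding `ι(h) = diag(h, J_n (ᵗh)⁻¹ J_n)`. -/
def iota (n : ℕ) (h : Matrix (Fin n) (Fin n) ℂ) :
    Matrix (Fin n ⊕ Fin n) (Fin n ⊕ Fin n) ℂ :=
  Matrix.fromBlocks h 0 0 (Jmat ℂ n * (hᵀ)⁻¹ * Jmat ℂ n)

/-! Conjugation by `π(g)` turns multiplication by `p` into multiplication by `π(g) p`, so `M`
becomes `g⁻¹ M ᵗ(g⁻¹)`. It turns derivations into derivations, and these are determined by their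
values on the generic matrix `x`. If `∂_S` is the derivation with `∂_S x = S - ᵗS`, so that
`D_{i,j}` is `∂_S` for the matrix unit `S = E_{i,j}`, this gives `π(g) ∂_S π(g)⁻¹ = ∂_{g S ᵗg}`; by
linearity in `S`, `D` becomes `ᵗg D g`. Conjugating by `ι(ᵗg)` has the same effect on the blocks of
`Φ(u)`, because `J² = 1`. -/

section Matrix

variable {R E E' l m p q : Type*} [CommSemiring R] [Semiring E] [Algebra R E]
  [Semiring E'] [Algebra R E'] [Fintype m] [Fintype p]

lemma map_algebraMap_mul_mul_apply (A : Matrix l m R) (T : Matrix m p E) (B : Matrix p q R)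
    (i : l) (j : q) :
    (A.map (algebraMap R E) * T * B.map (algebraMap R E)) i j =
      ∑ s, ∑ t, (A i s * B t j) • T s t := by
  simp_rw [Matrix.mul_apply, Finset.sum_mul, map_apply]
  rw [Finset.sum_comm]
  refine Finset.sum_congr rfl fun s _ => Finset.sum_congr rfl fun t _ => ?_
  rw [← Algebra.commutes, ← Algebra.smul_def, ← Algebra.smul_def, smul_smul, mul_comm]

lemma map_algebraMap_mul_mul_map (f : E →ₗ[R] E') (A : Matrix l m R) (T : Matrix m p E)
    (B : Matrix p q R) :
    (A.map (algebraMap R E) * T * B.map (algebraMap R E)).map f =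
      A.map (algebraMap R E') * T.map f * B.map (algebraMap R E') := by
  ext i j
  simp [map_algebraMap_mul_mul_apply]

lemma map_algebraMap_mul_map_algebraMap_of_mul_eq_one [DecidableEq m] {A B : Matrix m m R}
    (h : A * B = 1) : A.map (algebraMap R E) * B.map (algebraMap R E) = 1 := by
  rw [← Matrix.map_mul, h, Matrix.map_one _ (map_zero _) (map_one _)]

lemma ext_of_transpose_eq_neg {ι G : Type*} [LinearOrder ι] [AddGroup G] [IsAddTorsionFree G]
    {A B : Matrix ι ι G} (hA : Aᵀ = -A) (hB : Bᵀ = -B) (h : ∀ i j, i < j → A i j = B i j) :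
    A = B := by
  have swap {C : Matrix ι ι G} (hC : Cᵀ = -C) (i j : ι) : C j i = -C i j := congr($hC i j)
  ext i j
  rcases lt_trichotomy i j with hij | rfl | hji
  · exact h i j hij
  · rw [self_eq_neg.mp (swap hA i i), self_eq_neg.mp (swap hB i i)]
  · rw [swap hA j i, swap hB j i, h j i hji]

end Matrix

section Conjugation

variable {R A B : Type*} [CommSemiring R]

lemma conjAlgEquiv_mulLeft [Semiring A] [Algebra R A] [Semiring B] [Algebra R B]
    (e : A ≃ₐ[R] B) (a : A) :
    e.toLinearEquiv.conjAlgEquiv R (LinearMap.mulLeft R a) = LinearMap.mulLeft R (e a) := by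
  ext b
  simp [LinearEquiv.conjAlgEquiv_apply]

/-- The derivation `e ∘ d ∘ e⁻¹` of `B` obtained from a derivation `d` of `A` by transport along an
algebra isomorphism `e : A ≃ B`. -/
def conjDerivation [CommSemiring A] [Algebra R A] [CommSemiring B] [Algebra R B]
    (e : A ≃ₐ[R] B) (d : Derivation R A A) : Derivation R B B where
  toLinearMap := e.toLinearEquiv.conjAlgEquiv R (d : A →ₗ[R] A)
  map_one_eq_zero' := by simp [LinearEquiv.conjAlgEquiv_apply]
  leibniz' a b := by simp [LinearEquiv.conjAlgEquiv_apply]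

lemma conjDerivation_apply [CommSemiring A] [Algebra R A] [CommSemiring B] [Algebra R B]
    (e : A ≃ₐ[R] B) (d : Derivation R A A) (b : B) : conjDerivation e d b = e (d (e.symm b)) :=
  rfl

end Conjugation

section AntiDiagonal

lemma Jmat_apply (A : Type*) [Zero A] [One A] (n : ℕ) (i j : Fin n) :
    Jmat A n i j = if j = i.rev then 1 else 0 := by
  simp only [Jmat, of_apply, Fin.ext_iff, Fin.val_rev]
  congr 1
  exact propext (by omega)

lemma Jmat_mul_Jmat (A : Type*) [NonAssocSemiring A] (n : ℕ) : Jmat A n * Jmat A n = 1 := by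
  ext i j
  simp only [Matrix.mul_apply, Jmat_apply, ite_mul, one_mul, zero_mul, Finset.sum_ite_eq',
    Finset.mem_univ, if_true, Fin.rev_rev, Matrix.one_apply, eq_comm]

lemma Jmat_map {A B F : Type*} [NonAssocSemiring A] [NonAssocSemiring B] [FunLike F A B]
    [RingHomClass F A B] (f : F) (n : ℕ) : (Jmat A n).map f = Jmat B n := by
  ext i j
  simp [Jmat_apply, apply_ite f]

end AntiDiagonal

section GenericMatrix

variable {n : ℕ}

lemma genMat_apply_of_lt {i j : Fin n} (h : i < j) : genMat n i j = X ⟨(i, j), h⟩ := by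
  simp [genMat, h]

lemma transpose_genMat : (genMat n)ᵀ = -genMat n := by
  ext1 i j
  rcases lt_trichotomy i j with h | rfl | h <;> simp [genMat, *, lt_asymm]

lemma algHom_ext_genMat {f₁ f₂ : P n →ₐ[ℂ] P n}
    (h : (genMat n).map f₁ = (genMat n).map f₂) : f₁ = f₂ := by
  refine MvPolynomial.algHom_ext fun v => ?_
  simpa [genMat_apply_of_lt v.2] using congr($h v.1.1 v.1.2)

lemma derivation_ext_genMat {d₁ d₂ : Derivation ℂ (P n) (P n)}
    (h : (genMat n).map d₁ = (genMat n).map d₂) : d₁ = d₂ := by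
  refine MvPolynomial.derivation_ext fun v => ?_
  simpa [genMat_apply_of_lt v.2] using congr($h v.1.1 v.1.2)

lemma Mop_eq_mulLeft (i j : Fin n) : Mop n i j = LinearMap.mulLeft ℂ (genMat n i j) := by
  unfold Mop genMat
  ext
  simp only [of_apply]
  split_ifs <;> simp

/-- The derivative `∂_S` along the alternating matrix `S - ᵗS`. The dependence on `S` is
normalized so that the matrix unit `E_{i,j}` gives `D_{i,j}`. -/
def dirDerivation (S : Matrix (Fin n) (Fin n) ℂ) : Derivation ℂ (P n) (P n) :=
  mkDerivation ℂ fun v => algebraMap ℂ (P n) ((S - Sᵀ) v.1.1 v.1.2)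

lemma genMat_map_dirDerivation (S : Matrix (Fin n) (Fin n) ℂ) :
    (genMat n).map (dirDerivation S) = (S - Sᵀ).map (algebraMap ℂ (P n)) := by
  refine ext_of_transpose_eq_neg ?_ ?_ fun i j h => ?_
  · rw [← transpose_map, transpose_genMat, Matrix.map_neg _ (map_neg _)]
  · ext1 i j
    simp
  · rw [map_apply, genMat_apply_of_lt h, dirDerivation, mkDerivation_X, map_apply]

/-- The operator `∂_S` as a linear function of the matrix `S`. -/
def dirDeriv (n : ℕ) : Matrix (Fin n) (Fin n) ℂ →ₗ[ℂ] Module.End ℂ (P n) where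
  toFun S := dirDerivation S
  map_add' S T := by
    rw [← Derivation.coe_add_linearMap]
    congr 1
    refine MvPolynomial.derivation_ext fun v => ?_
    simp only [dirDerivation, Derivation.add_apply, mkDerivation_X, ← map_add]
    congr 1
    simp only [Matrix.sub_apply, Matrix.add_apply, transpose_apply]
    ring
  map_smul' c S := by
    rw [RingHom.id_apply, ← Derivation.coe_smul_linearMap]
    congr 1
    refine MvPolynomial.derivation_ext fun v => ?_
    simp [dirDerivation, smul_eq_C_mul, mul_sub]

lemma dirDeriv_apply (S : Matrix (Fin n) (Fin n) ℂ) : dirDeriv n S = dirDerivation S :=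
  rfl

lemma dirDeriv_transpose (S : Matrix (Fin n) (Fin n) ℂ) : dirDeriv n Sᵀ = -dirDeriv n S := by
  rw [dirDeriv_apply, dirDeriv_apply, ← Derivation.coe_neg_linearMap]
  congr 1
  refine MvPolynomial.derivation_ext fun v => ?_
  simp [dirDerivation]

lemma pderiv_eq_dirDerivation_single (v : Idx n) :
    pderiv v = dirDerivation (single v.1.1 v.1.2 1) := by
  refine MvPolynomial.derivation_ext fun w => ?_
  have not_swap : ¬(v.1.2 = w.1.1 ∧ v.1.1 = w.1.2) := fun h =>
    lt_asymm v.2 (h.1 ▸ h.2 ▸ w.2)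
  simp [dirDerivation, pderiv_X, Pi.single_apply, single_apply, not_swap, Subtype.ext_iff,
    Prod.ext_iff, eq_comm (a := w.1.1) (b := v.1.1), eq_comm (a := w.1.2) (b := v.1.2)]

lemma Dop_eq_dirDeriv_single (i j : Fin n) : Dop n i j = dirDeriv n (single i j 1) := by
  have : IsAddTorsionFree (Module.End ℂ (P n)) := .of_isTorsionFree ℂ _
  have transpose_Dop : (of (Dop n))ᵀ = -of (Dop n) := by
    ext1 i j
    rcases lt_trichotomy i j with h | rfl | h <;> simp [Dop, *, lt_asymm]
  have transpose_dirDeriv : (of fun i j : Fin n => dirDeriv n (single i j 1))ᵀ =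
      -of fun i j => dirDeriv n (single i j 1) := by
    ext1 i j
    simp [← dirDeriv_transpose]
  refine congr($(ext_of_transpose_eq_neg transpose_Dop transpose_dirDeriv fun i j h => ?_) i j)
  rw [of_apply, Dop, dif_pos h, pderiv_eq_dirDerivation_single, of_apply, dirDeriv_apply]

lemma dirDeriv_eq_sum (S : Matrix (Fin n) (Fin n) ℂ) :
    dirDeriv n S = ∑ k, ∑ l, S k l • Dop n k l := by
  conv_lhs => rw [matrix_eq_sum_single S]
  simp_rw [map_sum, Dop_eq_dirDeriv_single, ← map_smul, smul_single, smul_eq_mul, mul_one]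

end GenericMatrix

section Representation

variable {n : ℕ}

lemma genMat_map_piHom (g : GL (Fin n) ℂ) :
    (genMat n).map (piHom n g) =
      (g⁻¹.val).map (algebraMap ℂ (P n)) * genMat n * (g⁻¹.val)ᵀ.map (algebraMap ℂ (P n)) := by
  refine ext_of_transpose_eq_neg ?_ ?_ fun i j h => ?_
  · rw [← transpose_map, transpose_genMat, Matrix.map_neg _ (map_neg _)]
  · simp [Matrix.transpose_mul, transpose_genMat, Matrix.mul_assoc, transpose_map]
  · rw [map_apply, genMat_apply_of_lt h, piHom, aeval_X, transpose_map]

lemma piHom_one : piHom n 1 = AlgHom.id ℂ (P n) :=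
  algHom_ext_genMat <| by
    rw [genMat_map_piHom, inv_one, Units.val_one, transpose_one,
      Matrix.map_one _ (map_zero _) (map_one _), Matrix.one_mul, Matrix.mul_one]
    rfl

lemma piHom_mul (g h : GL (Fin n) ℂ) : piHom n (g * h) = (piHom n g).comp (piHom n h) := by
  refine algHom_ext_genMat ?_
  have map_comp : (genMat n).map ((piHom n g).comp (piHom n h)) =
      ((genMat n).map (piHom n h)).map (piHom n g).toLinearMap := by
    rw [AlgHom.coe_comp, ← Matrix.map_map, AlgHom.coe_toLinearMap]
  rw [map_comp, genMat_map_piHom h, map_algebraMap_mul_mul_map, AlgHom.coe_toLinearMap]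
  simp only [genMat_map_piHom, _root_.mul_inv_rev, Units.val_mul, Matrix.transpose_mul,
    Matrix.map_mul, Matrix.mul_assoc]

/-- `π(g)` as an automorphism of the algebra `P n`. -/
def piAut (g : GL (Fin n) ℂ) : P n ≃ₐ[ℂ] P n :=
  AlgEquiv.ofAlgHom (piHom n g) (piHom n g⁻¹) (by rw [← piHom_mul, mul_inv_cancel, piHom_one])
    (by rw [← piHom_mul, inv_mul_cancel, piHom_one])

lemma piAut_apply (g : GL (Fin n) ℂ) (p : P n) : piAut g p = piHom n g p :=
  rfl

lemma piAut_symm_apply (g : GL (Fin n) ℂ) (p : P n) : (piAut g).symm p = piHom n g⁻¹ p :=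
  rfl

/-- The automorphism `Ad_{π(g)} : T ↦ π(g) T π(g)⁻¹` of the algebra `End(P)`. -/
def adPi (g : GL (Fin n) ℂ) : Module.End ℂ (P n) ≃ₐ[ℂ] Module.End ℂ (P n) :=
  (piAut g).toLinearEquiv.conjAlgEquiv ℂ

lemma of_Mop_map_adPi (g : GL (Fin n) ℂ) :
    (of (Mop n)).map (adPi g) =
      (g⁻¹.val).map (algebraMap ℂ (Module.End ℂ (P n))) * of (Mop n) *
        (g⁻¹.val)ᵀ.map (algebraMap ℂ (Module.End ℂ (P n))) := by
  have of_Mop : of (Mop n) = (genMat n).map (Algebra.lmul ℂ (P n)).toLinearMap :=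
    Matrix.ext Mop_eq_mulLeft
  calc (of (Mop n)).map (adPi g)
      = ((genMat n).map (piHom n g)).map (Algebra.lmul ℂ (P n)).toLinearMap := by
        ext1 i j
        simp only [map_apply, of_apply, Mop_eq_mulLeft, adPi, conjAlgEquiv_mulLeft, piAut_apply]
        rfl
    _ = _ := by rw [genMat_map_piHom, map_algebraMap_mul_mul_map, of_Mop]

lemma conjDerivation_piAut_dirDerivation (g : GL (Fin n) ℂ) (S : Matrix (Fin n) (Fin n) ℂ) :
    conjDerivation (piAut g) (dirDerivation S) = dirDerivation (g.val * S * g.valᵀ) := by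
  refine derivation_ext_genMat ?_
  have map_conj : (genMat n).map (conjDerivation (piAut g) (dirDerivation S)) =
      (((genMat n).map (piHom n g⁻¹)).map (dirDerivation S : P n →ₗ[ℂ] P n)).map
        (piHom n g).toLinearMap := by
    ext1 i j
    simp only [map_apply, conjDerivation_apply, piAut_apply, piAut_symm_apply,
      Derivation.coeFn_coe, AlgHom.toLinearMap_apply]
  have map_scalars (A : Matrix (Fin n) (Fin n) ℂ) :
      (A.map (algebraMap ℂ (P n))).map (piHom n g).toLinearMap = A.map (algebraMap ℂ (P n)) := by
    ext1 i j
    simp only [map_apply, AlgHom.toLinearMap_apply, AlgHom.commutes]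
  rw [map_conj, genMat_map_piHom, map_algebraMap_mul_mul_map, Derivation.coeFn_coe,
    genMat_map_dirDerivation, inv_inv, ← Matrix.map_mul, ← Matrix.map_mul, map_scalars,
    genMat_map_dirDerivation]
  simp only [Matrix.mul_sub, Matrix.sub_mul, Matrix.transpose_mul, transpose_transpose,
    Matrix.mul_assoc]

lemma adPi_dirDeriv (g : GL (Fin n) ℂ) (S : Matrix (Fin n) (Fin n) ℂ) :
    adPi g (dirDeriv n S) = dirDeriv n (g.val * S * g.valᵀ) := by
  rw [dirDeriv_apply (g.val * S * g.valᵀ), ← conjDerivation_piAut_dirDerivation]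
  rfl

lemma of_Dop_map_adPi (g : GL (Fin n) ℂ) :
    (of (Dop n)).map (adPi g) =
      g.valᵀ.map (algebraMap ℂ (Module.End ℂ (P n))) * of (Dop n) *
        g.val.map (algebraMap ℂ (Module.End ℂ (P n))) := by
  ext1 i j
  have apply_conj_single (k l : Fin n) :
      (g.val * single i j (1 : ℂ) * g.valᵀ) k l = g.valᵀ i k * g.val l j := by
    simp [Matrix.mul_apply, single_apply, ite_and]
  rw [map_apply, of_apply, Dop_eq_dirDeriv_single, adPi_dirDeriv, dirDeriv_eq_sum,
    map_algebraMap_mul_mul_apply]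
  simp_rw [apply_conj_single, of_apply]

end Representation

section Iota

variable {n : ℕ} {E : Type*} [Ring E] [Algebra ℂ E]

lemma iota_one : iota n 1 = 1 := by
  simp [iota, Jmat_mul_Jmat]

lemma iota_mul (h k : Matrix (Fin n) (Fin n) ℂ) : iota n (h * k) = iota n h * iota n k := by
  have mul_Jmat_mul (A B : Matrix (Fin n) (Fin n) ℂ) :
      Jmat ℂ n * (A * B) * Jmat ℂ n = Jmat ℂ n * A * Jmat ℂ n * (Jmat ℂ n * B * Jmat ℂ n) := by
    simp only [Matrix.mul_assoc, ← Matrix.mul_assoc (Jmat ℂ n) (Jmat ℂ n), Jmat_mul_Jmat,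
      Matrix.one_mul]
  simp [iota, fromBlocks_multiply, Matrix.transpose_mul, Matrix.mul_inv_rev, mul_Jmat_mul]

lemma inv_iota {h : Matrix (Fin n) (Fin n) ℂ} (hh : IsUnit h.det) :
    (iota n h)⁻¹ = iota n h⁻¹ :=
  inv_eq_right_inv <| by rw [← iota_mul, mul_nonsing_inv h hh, iota_one]

lemma iota_mul_fromBlocks_mul_inv_iota {h : Matrix (Fin n) (Fin n) ℂ} (hh : IsUnit h.det)
    (u : ℂ) (D M : Matrix (Fin n) (Fin n) E) :
    (iota n h).map (algebraMap ℂ E) *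
        fromBlocks (u • 1) (D * Jmat E n) (-(Jmat E n * M)) (-(u • 1)) *
        ((iota n h)⁻¹).map (algebraMap ℂ E) =
      fromBlocks (u • 1) (h.map (algebraMap ℂ E) * D * hᵀ.map (algebraMap ℂ E) * Jmat E n)
        (-(Jmat E n * ((h⁻¹)ᵀ.map (algebraMap ℂ E) * M * (h⁻¹).map (algebraMap ℂ E))))
        (-(u • 1)) := by
  have Jmat_mul_Jmat_mul (A : Matrix (Fin n) (Fin n) E) : Jmat E n * (Jmat E n * A) = A := by
    rw [← Matrix.mul_assoc, Jmat_mul_Jmat, Matrix.one_mul]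
  have map_mul_map_inv : h.map (algebraMap ℂ E) * (h⁻¹).map (algebraMap ℂ E) = 1 :=
    map_algebraMap_mul_map_algebraMap_of_mul_eq_one (mul_nonsing_inv h hh)
  have map_transpose_inv_mul : (h⁻¹)ᵀ.map (algebraMap ℂ E) * hᵀ.map (algebraMap ℂ E) = 1 :=
    map_algebraMap_mul_map_algebraMap_of_mul_eq_one <| by
      rw [← Matrix.transpose_mul, mul_nonsing_inv h hh, transpose_one]
  have map_transpose_inv_mul_assoc (A : Matrix (Fin n) (Fin n) E) :
      (h⁻¹)ᵀ.map (algebraMap ℂ E) * (hᵀ.map (algebraMap ℂ E) * A) = A := by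
    rw [← Matrix.mul_assoc, map_transpose_inv_mul, Matrix.one_mul]
  rw [inv_iota hh, iota, iota, ← transpose_nonsing_inv, ← transpose_nonsing_inv,
    nonsing_inv_nonsing_inv h hh]
  simp only [fromBlocks_map, fromBlocks_multiply, Matrix.map_mul, Jmat_map,
    Matrix.map_zero _ (map_zero (algebraMap ℂ E)), Matrix.mul_zero, Matrix.zero_mul, smul_zero,
    neg_zero, add_zero, zero_add, Matrix.mul_neg, Matrix.neg_mul, Matrix.mul_smul, Matrix.smul_mul,
    Matrix.mul_one, Matrix.mul_assoc, Jmat_mul_Jmat_mul, map_mul_map_inv,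
    map_transpose_inv_mul_assoc, Jmat_mul_Jmat]

end Iota

lemma Phi_map {n : ℕ} {E F : Type*} [Ring E] [Algebra ℂ E] [FunLike F (Module.End ℂ (P n)) E]
    [AlgHomClass F ℂ (Module.End ℂ (P n)) E] (f : F) (u : ℂ) :
    (Phi n u).map f =
      fromBlocks (u • 1) ((of (Dop n)).map f * Jmat _ n) (-(Jmat _ n * (of (Mop n)).map f))
        (-(u • 1)) := by
  rw [Phi, fromBlocks_map, Matrix.map_neg _ (map_neg f), Matrix.map_neg _ (map_neg f),
    Matrix.map_mul, Matrix.map_mul, Jmat_map, Matrix.map_smul _ _ (map_smul f u),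
    Matrix.map_one _ (map_zero f) (map_one f)]

/-- `Ad_{π(g)}(Φ(u)) = ι(ᵗg) Φ(u) ι(ᵗg)⁻¹`. -/
theorem Ad_Phi (n : ℕ) (hn : 1 ≤ n) (g : GL (Fin n) ℂ) (u : ℂ) :
    (Matrix.of fun p q : Fin n ⊕ Fin n =>
        (piHom n g).toLinearMap ∘ₗ Phi n u p q ∘ₗ (piHom n g⁻¹).toLinearMap) =
      (iota n (g : Matrix (Fin n) (Fin n) ℂ)ᵀ).map (algebraMap ℂ (Module.End ℂ (P n))) *
        Phi n u *
        ((iota n (g : Matrix (Fin n) (Fin n) ℂ)ᵀ)⁻¹).map (algebraMap ℂ (Module.End ℂ (P n))) := by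
  have isUnit_det : IsUnit g.valᵀ.det := isUnit_det_transpose _ (isUnits_det_units g)
  calc
    _ = (Phi n u).map (adPi g) := rfl
    _ = fromBlocks (u • 1)
          (g.valᵀ.map (algebraMap ℂ _) * of (Dop n) * g.val.map (algebraMap ℂ _) * Jmat _ n)
          (-(Jmat _ n *
            (g⁻¹.val.map (algebraMap ℂ _) * of (Mop n) * (g⁻¹.val)ᵀ.map (algebraMap ℂ _))))
          (-(u • 1)) := by
      rw [Phi_map, of_Dop_map_adPi, of_Mop_map_adPi]
    _ = _ := by
      rw [Phi, iota_mul_fromBlocks_mul_inv_iota isUnit_det,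
        ← transpose_nonsing_inv, ← coe_units_inv, transpose_transpose, transpose_transpose]

end
end

section
/- Let 𝒜 be an associative unital algebra over a field of characteristic 0 (e.g. a ℚ-algebra), and let A, B ∈ 𝒜 be elements such that the commutator [A,B] := AB − BA commutes with both A and B, i.e. [A,[A,B]] = 0 and [B,[A,B]] = 0. Then for every nonnegative integer m, (A + B)^m = Σ_{k=0}^{⌊m/2⌋} ( m! / (2^k k! (m−2k)!) ) [A,B]^k Σ_{s=0}^{m−2k} C(m−2k, s) B^s A^{m−2k−s}, where C(·,·) is the binomial coefficient. -/
noncomputable section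

/-!
Let `C = [A, B]` and let `Nₙ` be the binomial expansion of `(A + B)ⁿ` with every `B` written to the
left of every `A`. Left multiplication `L_B` and right multiplication `R_A` commute, so
`Nₙ = (L_B + R_A)ⁿ 1`. Since `[L_A, L_B + R_A] = L_C` commutes with `L_B + R_A`, this gives the
Hermite-type recurrence `(A + B) Nₙ = Nₙ₊₁ + n C Nₙ₋₁`. Iterating it, `(A + B)ᵐ` becomes a sum over
the matchings of `m` points, a matching with `k` edges contributing `Cᵏ Nₘ₋₂ₖ`.
-/

open Finset
open LinearMap (mulLeft mulRight mulLeft_apply mulRight_apply commute_mulLeft_right)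
open scoped Nat

/-- The number of matchings with `k` edges in the complete graph on `m` vertices: choose the `2 * k`
vertices to be covered, then one of their `(2 * k - 1)‼` perfect matchings. It vanishes if
`m < 2 * k`, and for `k = 0` the truncated `(0 - 1)‼ = 0‼ = 1` is the correct value. -/
def matchingCount (m k : ℕ) : ℕ :=
  m.choose (2 * k) * (2 * k - 1)‼

@[simp]
lemma matchingCount_zero_right (m : ℕ) : matchingCount m 0 = 1 := by
  simp [matchingCount]

lemma matchingCount_eq_zero_of_lt {m k : ℕ} (h : m < 2 * k) : matchingCount m k = 0 := by
  rw [matchingCount, Nat.choose_eq_zero_of_lt h, zero_mul]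

/-- The last of `m + 1` vertices is either uncovered, or matched with one of the `m - 2 * k`
vertices that the other `k` edges leave free. -/
lemma matchingCount_succ_succ (m k : ℕ) :
    matchingCount (m + 1) (k + 1) = matchingCount m (k + 1) + (m - 2 * k) * matchingCount m k := by
  have absorb : m.choose (2 * k + 1) * (2 * k + 1) = m.choose (2 * k) * (m - 2 * k) :=
    Nat.choose_succ_right_eq m (2 * k)
  calc (m + 1).choose (2 * k + 2) * (2 * k + 1)‼
      = m.choose (2 * k + 2) * (2 * k + 1)‼
          + m.choose (2 * k + 1) * (2 * k + 1) * (2 * k - 1)‼ := by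
        rw [Nat.choose_succ_succ', mul_assoc, ← Nat.doubleFactorial_add_one]; ring
    _ = m.choose (2 * k + 2) * (2 * k + 1)‼
          + (m - 2 * k) * (m.choose (2 * k) * (2 * k - 1)‼) := by
        rw [absorb]; ring

lemma factorial_two_mul (k : ℕ) : (2 * k)! = 2 ^ k * k ! * (2 * k - 1)‼ := by
  cases k with
  | zero => rfl
  | succ k =>
    rw [← Nat.doubleFactorial_two_mul]
    exact Nat.factorial_eq_mul_doubleFactorial (2 * k + 1)

lemma matchingCount_mul_factorial {m k : ℕ} (h : 2 * k ≤ m) :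
    matchingCount m k * (2 ^ k * k ! * (m - 2 * k)!) = m ! := by
  rw [← Nat.choose_mul_factorial_mul_factorial h, factorial_two_mul, matchingCount]
  ring

lemma cast_matchingCount (K : Type*) [Field K] [CharZero K] {m k : ℕ} (h : 2 * k ≤ m) :
    (matchingCount m k : K) = (m ! : K) / ((2 : K) ^ k * (k ! : K) * ((m - 2 * k)! : K)) := by
  have factorial_ne_zero (n : ℕ) : (n ! : K) ≠ 0 := Nat.cast_ne_zero.2 n.factorial_ne_zero
  rw [eq_div_iff (by simp [factorial_ne_zero]), ← matchingCount_mul_factorial h]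
  push_cast
  rfl

section Semiring

variable {R : Type*} [Semiring R]

lemma mul_pow_succ_of_mul_eq_add {x y c : R} (h : x * y = y * x + c) (hc : Commute c y) (n : ℕ) :
    x * y ^ (n + 1) = y ^ (n + 1) * x + (n + 1) • (c * y ^ n) := by
  induction n with
  | zero => simpa using h
  | succ n ih =>
    calc x * y ^ (n + 2)
        = (y ^ (n + 1) * x + (n + 1) • (c * y ^ n)) * y := by
          rw [pow_succ y (n + 1), ← mul_assoc, ih]
      _ = y ^ (n + 1) * (y * x + c) + (n + 1) • (c * y ^ (n + 1)) := by
          rw [add_mul, mul_assoc, h, smul_mul_assoc, mul_assoc c, ← pow_succ]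
      _ = y ^ (n + 2) * x + (n + 2) • (c * y ^ (n + 1)) := by
          rw [mul_add, ← mul_assoc, ← pow_succ, ← (hc.pow_right (n + 1)).eq, add_assoc,
            succ_nsmul' _ (n + 1)]

/-- The normally ordered `n`-th power of `A + B`: its binomial expansion with every `B` to the left
of every `A`. -/
def normalOrderedPow (A B : R) (n : ℕ) : R :=
  ∑ s ∈ range (n + 1), n.choose s • (B ^ s * A ^ (n - s))

lemma normalOrderedPow_eq_pow_apply_one (A B : R) (n : ℕ) :
    normalOrderedPow A B n = ((mulLeft ℕ B + mulRight ℕ A) ^ n) 1 := by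
  rw [(commute_mulLeft_right (R := ℕ) B A).add_pow', Nat.sum_antidiagonal_eq_sum_range_succ_mk]
  simp [normalOrderedPow, LinearMap.pow_mulLeft, LinearMap.pow_mulRight]

lemma normalOrderedPow_zero (A B : R) : normalOrderedPow A B 0 = 1 := by
  simp [normalOrderedPow]

lemma normalOrderedPow_succ (A B : R) (n : ℕ) :
    normalOrderedPow A B (n + 1) = B * normalOrderedPow A B n + normalOrderedPow A B n * A := by
  simp only [normalOrderedPow_eq_pow_apply_one, pow_succ', Module.End.mul_apply,
    LinearMap.add_apply, mulLeft_apply, mulRight_apply]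

variable {A B C : R}

lemma mul_normalOrderedPow_succ (h : A * B = B * A + C) (hB : Commute B C) (n : ℕ) :
    A * normalOrderedPow A B (n + 1) =
      normalOrderedPow A B (n + 1) * A + (n + 1) • (C * normalOrderedPow A B n) := by
  let T : Module.End ℕ R := mulLeft ℕ B + mulRight ℕ A
  have mulLeft_mul_T : mulLeft ℕ A * T = T * mulLeft ℕ A + mulLeft ℕ C := by
    ext x
    simp only [T, Module.End.mul_apply, LinearMap.add_apply, mulLeft_apply, mulRight_apply, mul_add,
      ← mul_assoc, h, add_mul]
    abel
  have commute_C : Commute (mulLeft ℕ C) T := by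
    ext x
    simp [T, mul_add, ← mul_assoc, hB.eq]
  have commute_A : Commute (mulRight ℕ A) T :=
    (commute_mulLeft_right B A).symm.add_right (Commute.refl _)
  have pow_apply_A : (T ^ (n + 1)) A = (T ^ (n + 1)) 1 * A := by
    simpa using (LinearMap.congr_fun (commute_A.pow_right (n + 1)).eq 1).symm
  have mul_pow_apply_one :=
    LinearMap.congr_fun (mul_pow_succ_of_mul_eq_add mulLeft_mul_T commute_C n) 1
  simpa only [normalOrderedPow_eq_pow_apply_one, Module.End.mul_apply, LinearMap.add_apply,
    LinearMap.smul_apply, mulLeft_apply, mul_one, pow_apply_A] using mul_pow_apply_one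

lemma add_mul_normalOrderedPow (h : A * B = B * A + C) (hB : Commute B C) (n : ℕ) :
    (A + B) * normalOrderedPow A B n =
      normalOrderedPow A B (n + 1) + n • (C * normalOrderedPow A B (n - 1)) := by
  cases n with
  | zero => simp [normalOrderedPow_succ, normalOrderedPow_zero, add_comm]
  | succ n =>
    rw [add_mul, mul_normalOrderedPow_succ h hB, normalOrderedPow_succ A B (n + 1),
      Nat.add_sub_cancel, add_right_comm, add_comm (B * _)]

/-- The coefficient handles the degenerate range `m < 2 * k`, in which the truncated subtractions
would break the recurrence. -/
lemma add_mul_matchingCount_smul (h : A * B = B * A + C) (hA : Commute A C) (hB : Commute B C)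
    (m k : ℕ) :
    (A + B) * (matchingCount m k • (C ^ k * normalOrderedPow A B (m - 2 * k))) =
      matchingCount m k • (C ^ k * normalOrderedPow A B (m + 1 - 2 * k)) +
        ((m - 2 * k) * matchingCount m k) •
          (C ^ (k + 1) * normalOrderedPow A B (m + 1 - 2 * (k + 1))) := by
  rcases lt_or_ge m (2 * k) with hk | hk
  · simp [matchingCount_eq_zero_of_lt hk]
  have add_mul_term : (A + B) * (C ^ k * normalOrderedPow A B (m - 2 * k)) =
      C ^ k * normalOrderedPow A B (m - 2 * k + 1) +
        (m - 2 * k) • (C ^ (k + 1) * normalOrderedPow A B (m - 2 * k - 1)) := by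
    rw [← mul_assoc, ((hA.add_left hB).pow_right k).eq, mul_assoc, add_mul_normalOrderedPow h hB,
      mul_add, mul_smul_comm, ← mul_assoc, ← pow_succ]
  rw [mul_smul_comm, add_mul_term, smul_add, smul_smul, mul_comm (matchingCount m k),
    show m + 1 - 2 * k = m - 2 * k + 1 by lia,
    show m + 1 - 2 * (k + 1) = m - 2 * k - 1 by lia]

lemma add_pow_eq_sum_matchingCount (h : A * B = B * A + C) (hA : Commute A C) (hB : Commute B C)
    (m : ℕ) :
    (A + B) ^ m =
      ∑ k ∈ range (m + 1), matchingCount m k • (C ^ k * normalOrderedPow A B (m - 2 * k)) := by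
  induction m with
  | zero => simp [normalOrderedPow_zero]
  | succ m ih =>
    let t (k : ℕ) : R := C ^ k * normalOrderedPow A B (m + 1 - 2 * k)
    have top_eq_zero : matchingCount m (m + 1) • t (m + 1) = 0 := by
      rw [matchingCount_eq_zero_of_lt (by lia), zero_smul]
    calc (A + B) ^ (m + 1)
        = ∑ k ∈ range (m + 1), matchingCount m k • t k +
            ∑ k ∈ range (m + 1), ((m - 2 * k) * matchingCount m k) • t (k + 1) := by
          rw [pow_succ', ih, mul_sum, ← sum_add_distrib]
          exact sum_congr rfl fun k _ ↦ add_mul_matchingCount_smul h hA hB m k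
      _ = ∑ k ∈ range (m + 1), matchingCount m (k + 1) • t (k + 1) + t 0 +
            ∑ k ∈ range (m + 1), ((m - 2 * k) * matchingCount m k) • t (k + 1) := by
          rw [← add_zero (∑ k ∈ range (m + 1), matchingCount m k • t k), ← top_eq_zero,
            ← sum_range_succ (fun k ↦ matchingCount m k • t k), sum_range_succ',
            matchingCount_zero_right, one_smul]
      _ = ∑ k ∈ range (m + 1), matchingCount (m + 1) (k + 1) • t (k + 1) + t 0 := by
          simp only [matchingCount_succ_succ, add_smul, sum_add_distrib]
          exact add_right_comm _ _ _
      _ = ∑ k ∈ range (m + 2), matchingCount (m + 1) k • t k := by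
          rw [sum_range_succ' _ (m + 1), matchingCount_zero_right, one_smul]

theorem add_pow_of_commutator_central_general (h : A * B = B * A + C) (hA : Commute A C)
    (hB : Commute B C) (m : ℕ) :
    (A + B) ^ m =
      ∑ k ∈ range (m / 2 + 1), (m.choose (2 * k) * (2 * k - 1)‼) •
        (C ^ k * ∑ s ∈ range (m - 2 * k + 1),
          (m - 2 * k).choose s • (B ^ s * A ^ (m - 2 * k - s))) := by
  rw [add_pow_eq_sum_matchingCount h hA hB m]
  refine (sum_subset (range_mono (by lia)) fun k _ hk ↦ ?_).symm
  have hk : m < 2 * k := by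
    rw [mem_range] at hk
    lia
  rw [matchingCount_eq_zero_of_lt hk, zero_smul]

end Semiring

/-- Binomial-type expansion of `(A + B)^m` when the commutator `[A,B]` commutes with
both `A` and `B`, over a field of characteristic zero. -/
theorem add_pow_of_commutator_central {K : Type*} [Field K] [CharZero K]
    {𝒜 : Type*} [Ring 𝒜] [Algebra K 𝒜] (A B : 𝒜)
    (hA : A * (A * B - B * A) = (A * B - B * A) * A)
    (hB : B * (A * B - B * A) = (A * B - B * A) * B) (m : ℕ) :
    (A + B) ^ m =
      ∑ k ∈ Finset.range (m / 2 + 1),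
        ((m.factorial : K) /
            ((2 : K) ^ k * (k.factorial : K) * ((m - 2 * k).factorial : K))) •
          ((A * B - B * A) ^ k *
            ∑ s ∈ Finset.range (m - 2 * k + 1),
              ((m - 2 * k).choose s) • (B ^ s * A ^ (m - 2 * k - s))) := by
  rw [add_pow_of_commutator_central_general (add_sub_cancel _ _).symm hA hB m]
  refine sum_congr rfl fun k hk ↦ ?_
  rw [← cast_matchingCount K (by rw [mem_range] at hk; lia), Nat.cast_smul_eq_nsmul, matchingCount]

end
end

section
/- Let 𝒜 be an associative unital ℂ-algebra, let W be a 2m-dimensional ℂ-vector space with basis f_1, …, f_{2m}, and let ⋀W ⊗ 𝒜 be the tensor product algebra of the exterior algebra of W with 𝒜, with product (ω⊗X)(θ⊗Y) = (ω∧θ)⊗(XY). For a 2m×2m alternating matrix A = (A_{i,j}) over 𝒜, set Ξ_A := Σ_{i,j=1}^{2m} f_i f_j ⊗ A_{i,j}. Then Ξ_A^m = 2^m m! (f_1 ∧ f_2 ∧ ⋯ ∧ f_{2m}) ⊗ Pf(A). -/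
open TensorProduct

noncomputable section

/-- Pfaffian of a `2m × 2m` matrix with (possibly noncommuting) entries in a `ℂ`-algebra. -/
def Pf {A : Type*} [Ring A] [Algebra ℂ A] {m : ℕ} (B : Matrix (Fin (2 * m)) (Fin (2 * m)) A) :
    A :=
  (((2 : ℂ) ^ m * m.factorial)⁻¹) • ∑ σ : Equiv.Perm (Fin (2 * m)),
    (Equiv.Perm.sign σ : ℤ) •
      (List.ofFn (fun i : Fin m =>
        B (σ ⟨2 * (i : ℕ), by have := i.isLt; omega⟩)
          (σ ⟨2 * (i : ℕ) + 1, by have := i.isLt; omega⟩))).prod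

/-- `2m`-dimensional vector space with basis `f_1, …, f_{2m}`. -/
abbrev W (m : ℕ) := Fin (2 * m) → ℂ

/-- The basis vectors `f_i` in the exterior algebra `⋀W`. -/
def f (m : ℕ) (i : Fin (2 * m)) : ExteriorAlgebra ℂ (W m) :=
  ExteriorAlgebra.ι ℂ (Pi.single i 1)

/-- The 2-form `Ξ_A = Σ_{i,j} f_i f_j ⊗ A_{i,j}` associated to `A`. -/
def Xi {A : Type*} [Ring A] [Algebra ℂ A] (m : ℕ)
    (B : Matrix (Fin (2 * m)) (Fin (2 * m)) A) : ExteriorAlgebra ℂ (W m) ⊗[ℂ] A :=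
  ∑ i : Fin (2 * m), ∑ j : Fin (2 * m), (f m i * f m j) ⊗ₜ[ℂ] B i j

/-!
Expand `Ξ ^ m` as a sum over index words of length `2m`. The exterior factor of a word is an
alternating function of the word, so it vanishes unless the word is a permutation `σ`, in which case
it equals `sgn σ` times `f_1 ∧ ⋯ ∧ f_{2m}`; the remaining signed sum of products of entries is
`2^m m! Pf`, in which every product keeps the order it had in the expansion.
-/

section Expansion

variable {R S A κ : Type*}

theorem sum_pow_eq_sum_list_prod [Semiring A] [Fintype κ] (a : κ → A) (n : ℕ) :
    (∑ k, a k) ^ n = ∑ r : Fin n → κ, (List.ofFn fun i => a (r i)).prod := by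
  rw [← MultilinearMap.mkPiAlgebraFin_apply_const (R := ℕ), MultilinearMap.map_sum]
  simp only [MultilinearMap.mkPiAlgebraFin_apply]

theorem list_prod_ofFn_mul_pairs [Monoid S] {n : ℕ} (a : Fin (2 * n) → S) :
    (List.ofFn fun i : Fin n => a ⟨2 * i, by lia⟩ * a ⟨2 * i + 1, by lia⟩).prod =
      (List.ofFn a).prod := by
  simp [List.ofFn_mul', List.prod_flatten, List.map_ofFn, Function.comp_def]

theorem list_prod_ofFn_tmul [CommSemiring R] [Semiring S] [Algebra R S] [Semiring A] [Algebra R A]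
    {n : ℕ} (a : Fin n → S) (b : Fin n → A) :
    (List.ofFn fun i => a i ⊗ₜ[R] b i).prod = (List.ofFn a).prod ⊗ₜ[R] (List.ofFn b).prod := by
  induction n with
  | zero => simp only [List.ofFn_zero, List.prod_nil, Algebra.TensorProduct.one_def]
  | succ n ih =>
    simp only [List.ofFn_succ, List.prod_cons, ih, Algebra.TensorProduct.tmul_mul_tmul]

/-- Words of even length as words of consecutive pairs of letters; it reindexes the expansion of
a power of a double sum. -/
def pairWordEquiv (κ : Type*) (n : ℕ) : (Fin (2 * n) → κ) ≃ (Fin n → κ × κ) where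
  toFun s i := (s ⟨2 * i, by lia⟩, s ⟨2 * i + 1, by lia⟩)
  invFun r k :=
    if (k : ℕ) % 2 = 0 then (r ⟨k / 2, by lia⟩).1 else (r ⟨k / 2, by lia⟩).2
  left_inv s := by
    funext k
    dsimp only
    split <;> congr 1 <;> ext <;> dsimp only <;> lia
  right_inv r := by
    funext i
    have odd_div : (2 * (i : ℕ) + 1) / 2 = i := by lia
    simp [odd_div, Nat.add_mod]

theorem sum_mul_tmul_pow [CommSemiring R] [Semiring S] [Algebra R S] [Semiring A] [Algebra R A]
    [Fintype κ] (a : κ → S) (B : κ → κ → A) (n : ℕ) :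
    (∑ i, ∑ j, (a i * a j) ⊗ₜ[R] B i j) ^ n =
      ∑ s : Fin (2 * n) → κ, (List.ofFn fun k => a (s k)).prod ⊗ₜ[R]
        (List.ofFn fun i : Fin n => B (s ⟨2 * i, by lia⟩) (s ⟨2 * i + 1, by lia⟩)).prod := by
  rw [← Fintype.sum_prod_type', sum_pow_eq_sum_list_prod, ← (pairWordEquiv κ n).sum_comp]
  refine Fintype.sum_congr _ _ fun s => ?_
  rw [list_prod_ofFn_tmul, ← list_prod_ofFn_mul_pairs fun k => a (s k)]
  rfl

end Expansion

section Alternating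

variable {R M N P κ : Type*} [Fintype κ] [DecidableEq κ]

theorem sum_fun_eq_sum_perm [AddCommMonoid P] (x : (κ → κ) → P)
    (hx : ∀ s, ¬Function.Injective s → x s = 0) : ∑ s, x s = ∑ σ : Equiv.Perm κ, x σ := by
  refine (Fintype.sum_of_injective _ DFunLike.coe_injective _ _ (fun s hs => hx s ?_)
    fun _ => rfl).symm
  exact fun s_inj =>
    hs ⟨Equiv.ofBijective s (Finite.injective_iff_bijective.mp s_inj), rfl⟩

theorem sum_alternatingMap_comp_tmul [CommSemiring R] [AddCommMonoid M] [Module R M]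
    [AddCommGroup N] [Module R N] [AddCommGroup P] [Module R P] (g : M [⋀^κ]→ₗ[R] N) (v : κ → M)
    (w : (κ → κ) → P) :
    ∑ s : κ → κ, g (v ∘ s) ⊗ₜ[R] w s =
      g v ⊗ₜ[R] ∑ σ : Equiv.Perm κ, (Equiv.Perm.sign σ : ℤ) • w σ := by
  rw [sum_fun_eq_sum_perm, TensorProduct.tmul_sum]
  · refine Fintype.sum_congr _ _ fun σ => ?_
    rw [g.map_perm, Units.smul_def, TensorProduct.smul_tmul]
  · intro s s_not_inj
    rw [g.map_eq_zero_of_not_injective _ (mt Function.Injective.of_comp s_not_inj),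
      TensorProduct.zero_tmul]

end Alternating

/-- The Pfaffian without its normalization `1 / (2^m m!)`, which makes sense over any ring. -/
def pfaffianSum {A : Type*} [Ring A] {m : ℕ} (B : Matrix (Fin (2 * m)) (Fin (2 * m)) A) : A :=
  ∑ σ : Equiv.Perm (Fin (2 * m)), (Equiv.Perm.sign σ : ℤ) •
    (List.ofFn fun i : Fin m => B (σ ⟨2 * i, by lia⟩) (σ ⟨2 * i + 1, by lia⟩)).prod

theorem smul_Pf {A : Type*} [Ring A] [Algebra ℂ A] {m : ℕ}
    (B : Matrix (Fin (2 * m)) (Fin (2 * m)) A) :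
    ((2 : ℂ) ^ m * (m.factorial : ℂ)) • Pf B = pfaffianSum B :=
  smul_inv_smul₀ (by simp [Nat.factorial_ne_zero]) _

theorem Xi_pow_general {R M A : Type*} [CommRing R] [AddCommGroup M] [Module R M] [Ring A]
    [Algebra R A] {m : ℕ} (v : Fin (2 * m) → M) (B : Matrix (Fin (2 * m)) (Fin (2 * m)) A) :
    (∑ i, ∑ j, (ExteriorAlgebra.ι R (v i) * ExteriorAlgebra.ι R (v j)) ⊗ₜ[R] B i j) ^ m =
      (List.ofFn fun i => ExteriorAlgebra.ι R (v i)).prod ⊗ₜ[R] pfaffianSum B :=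
  (sum_mul_tmul_pow (fun i => ExteriorAlgebra.ι R (v i)) B m).trans
    (sum_alternatingMap_comp_tmul (ExteriorAlgebra.ιMulti R (2 * m)) v _)

/-- `Ξ_A^m = 2^m m! (f_1 ∧ ⋯ ∧ f_{2m}) ⊗ Pf(A)` for an alternating matrix `A`. -/
theorem Xi_pow (m : ℕ) {A : Type*} [Ring A] [Algebra ℂ A]
    (B : Matrix (Fin (2 * m)) (Fin (2 * m)) A)
    (halt : ∀ i j, B j i = -B i j) (hdiag : ∀ i, B i i = 0) :
    Xi m B ^ m =
      ((2 : ℂ) ^ m * (m.factorial : ℂ)) •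
        ((List.ofFn (fun i : Fin (2 * m) => f m i)).prod ⊗ₜ[ℂ] Pf B) := by
  rw [← TensorProduct.tmul_smul, smul_Pf]
  exact Xi_pow_general (fun i => Pi.single i 1) B

end
end
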